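/- arXiv:1406.6404 — 8 statements merged into one kernel-verified Lean document; each statement's English description precedes it below -/
import Mathlib

section
/- Let K be a separable real Hilbert space, let V be a strongly positive self-adjoint bounded linear operator on K, and let R: K → K be such that V^{1/2} R V^{1/2} is ϑ-cocoercive for some ϑ > 0. Then V R is ϑ-cocoercive for the inner product ⟨u, w⟩_{V^{-1}} = ⟨u, V^{-1} w⟩; that is, for all z, z' ∈ K, ⟨z − z', V R z − V R z'⟩_{V^{-1}} ≥ ϑ ‖V R z − V R z'‖²_{V^{-1}}. -/
open scoped RealInnerProductSpace

/-- A bounded linear operator on a real Hilbert space is strongly positive self-adjoint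
if it is self-adjoint and there is `α > 0` with `⟪x, V x⟫ ≥ α ‖x‖²` for all `x`. -/
def IsSPSA {K : Type*} [NormedAddCommGroup K] [InnerProductSpace ℝ K]
    (V : K →L[ℝ] K) : Prop :=
  (∀ x y : K, ⟪V x, y⟫ = ⟪x, V y⟫) ∧ ∃ α : ℝ, 0 < α ∧ ∀ x : K, α * ‖x‖ ^ 2 ≤ ⟪x, V x⟫

/-- `B` is `β`-cocoercive. -/
def Cocoercive {K : Type*} [NormedAddCommGroup K] [InnerProductSpace ℝ K]
    (β : ℝ) (B : K → K) : Prop :=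
  ∀ x y : K, β * ‖B x - B y‖ ^ 2 ≤ ⟪x - y, B x - B y⟫

/-- if `V^{1/2} R V^{1/2}` is `ϑ`-cocoercive, then `V R` is `ϑ`-cocoercive
for the inner product `⟪u, w⟫_{V⁻¹} = ⟪u, V⁻¹ w⟫`. -/
theorem stmt_1
    {K : Type*} [NormedAddCommGroup K] [InnerProductSpace ℝ K] [CompleteSpace K]
    [TopologicalSpace.SeparableSpace K]
    (V Vhalf Vinv : K →L[ℝ] K)
    (hV : IsSPSA V) (hVhalfSPSA : IsSPSA Vhalf)
    (hVhalf : ∀ x : K, Vhalf (Vhalf x) = V x)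
    (hVinv : ∀ x : K, V (Vinv x) = x) (hVinv' : ∀ x : K, Vinv (V x) = x)
    (R : K → K) (ϑ : ℝ) (hϑ : 0 < ϑ)
    (hcoco : Cocoercive ϑ (fun x => Vhalf (R (Vhalf x)))) :
    ∀ z z' : K,
      ϑ * ⟪V (R z) - V (R z'), Vinv (V (R z) - V (R z'))⟫
        ≤ ⟪z - z', Vinv (V (R z) - V (R z'))⟫ := by
  intro z z'
  have h := hcoco (Vhalf (Vinv z)) (Vhalf (Vinv z'))
  simp only [hVhalf, hVinv] at h
  rw [← map_sub Vhalf (R z), ← map_sub Vhalf (Vinv z), ← map_sub Vinv, ← hVhalfSPSA.1, hVhalf,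
    hVinv, ← real_inner_self_eq_norm_sq, ← hVhalfSPSA.1, hVhalf] at h
  rw [← map_sub, hVinv']
  exact h
end

section
/- Let K and K̃ be separable real Hilbert spaces, let L ∈ B(K, K̃), let R̃: K̃ → K̃ be ϑ̃-cocoercive with ϑ̃ > 0, and set R = L* R̃ L: K → K. Let V be a strongly positive self-adjoint bounded linear operator on K and let ϑ > 0 be such that ϑ · ‖L V L*‖ = ϑ̃. Then V^{1/2} R V^{1/2} is ϑ-cocoercive. -/
open scoped RealInnerProductSpace

/-- with `R = L* R̃ L` for `R̃` a `ϑ̃`-cocoercive operator, and `V` strongly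
positive self-adjoint with `ϑ ‖L V L*‖ = ϑ̃`, the operator `V^{1/2} R V^{1/2}` is
`ϑ`-cocoercive. -/
theorem stmt_2
    {K : Type*} [NormedAddCommGroup K] [InnerProductSpace ℝ K] [CompleteSpace K]
    [TopologicalSpace.SeparableSpace K]
    {Kt : Type*} [NormedAddCommGroup Kt] [InnerProductSpace ℝ Kt] [CompleteSpace Kt]
    [TopologicalSpace.SeparableSpace Kt]
    (L : K →L[ℝ] Kt)
    (Rt : Kt → Kt) (ϑt : ℝ) (hϑt : 0 < ϑt) (hRt : Cocoercive ϑt Rt)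
    (V Vhalf : K →L[ℝ] K) (hV : IsSPSA V) (hVhalfSPSA : IsSPSA Vhalf)
    (hVhalf : ∀ x : K, Vhalf (Vhalf x) = V x)
    (ϑ : ℝ) (hϑ : 0 < ϑ)
    (hnorm : ϑ * ‖L.comp (V.comp (ContinuousLinearMap.adjoint L))‖ = ϑt) :
    Cocoercive ϑ
      (fun x => Vhalf (ContinuousLinearMap.adjoint L (Rt (L (Vhalf x))))) := by
  intro x y
  have h := hRt (L (Vhalf x)) (L (Vhalf y))
  simp only [← map_sub] at h ⊢
  set d := Rt (L (Vhalf x)) - Rt (L (Vhalf y)) with hd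
  have h1 : ⟪x - y, Vhalf (ContinuousLinearMap.adjoint L d)⟫ = ⟪L (Vhalf (x - y)), d⟫ := by
    rw [← hVhalfSPSA.1, ContinuousLinearMap.adjoint_inner_right]
  have h2 : ‖Vhalf (ContinuousLinearMap.adjoint L d)‖ ^ 2
      = ⟪d, (L.comp (V.comp (ContinuousLinearMap.adjoint L))) d⟫ := by
    rw [← real_inner_self_eq_norm_sq, hVhalfSPSA.1, hVhalf,
      ContinuousLinearMap.adjoint_inner_left]
    rfl
  have h3 : ⟪d, (L.comp (V.comp (ContinuousLinearMap.adjoint L))) d⟫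
      ≤ ‖L.comp (V.comp (ContinuousLinearMap.adjoint L))‖ * ‖d‖ ^ 2 := by
    refine (real_inner_le_norm _ _).trans ?_
    have := mul_le_mul_of_nonneg_left
      ((L.comp (V.comp (ContinuousLinearMap.adjoint L))).le_opNorm d) (norm_nonneg d)
    linarith
  rw [h1, h2]
  refine le_trans ?_ h
  rw [← hnorm, mul_assoc]
  exact mul_le_mul_of_nonneg_left h3 hϑ.le
end

section
/- Let H and G be separable real Hilbert spaces, let L ∈ B(H, G), and let W ∈ B(H), U ∈ B(G) be strongly positive self-adjoint operators with ‖U^{1/2} L W^{1/2}‖ < 1. Then the operator V': H ⊕ G → H ⊕ G: (x, v) ↦ (W^{-1} x − L* v, −L x + U^{-1} v) is a strongly positive self-adjoint bounded operator on K = H ⊕ G; moreover W^{-1} − L* U L and U^{-1} − L W L* are isomorphisms and the inverse of V' is the operator V: (x, v) ↦ ((W^{-1} − L* U L)^{-1} x + W L* (U^{-1} − L W L*)^{-1} v, (U^{-1} − L W L*)^{-1} (L W x + v)), which is also a strongly positive self-adjoint bounded operator on K. -/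
open scoped RealInnerProductSpace

theorem spsa_of_inverse {K : Type*} [NormedAddCommGroup K] [InnerProductSpace ℝ K]
    [CompleteSpace K] (V : K →L[ℝ] K) (hV : IsSPSA V) :
    ∃ T : K →L[ℝ] K, (∀ x, V (T x) = x) ∧ (∀ x, T (V x) = x) ∧ IsSPSA T := by
  obtain ⟨hs, α, hα, hc⟩ := hV
  have hu : IsUnit V := by
    refine ContinuousLinearMap.isUnit_of_forall_le_norm_inner_map V
      (c := ⟨α, hα.le⟩) hα fun x => ?_
    have h1 := hc x
    have h2 : ⟪x, V x⟫ = ⟪V x, x⟫ := real_inner_comm _ _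
    have h3 := le_abs_self (⟪V x, x⟫)
    change ‖x‖ ^ 2 * α ≤ |⟪V x, x⟫|
    nlinarith
  obtain ⟨u, rfl⟩ := hu
  set V : K →L[ℝ] K := (u : K →L[ℝ] K) with hVdef
  set T : K →L[ℝ] K := ((u⁻¹ : (K →L[ℝ] K)ˣ) : K →L[ℝ] K) with hT
  have h1 : ∀ x, V (T x) = x := fun x => by
    have := u.mul_inv
    exact DFunLike.congr_fun this x
  have h2 : ∀ x, T (V x) = x := fun x => by
    have := u.inv_mul
    exact DFunLike.congr_fun this x
  refine ⟨T, h1, h2, fun x y => ?_, α / (‖V‖ ^ 2 + 1), by positivity, fun y => ?_⟩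
  · have := hs (T x) (T y)
    rw [h1, h1] at this
    exact this.symm
  · have a1 := hc (T y)
    rw [h1, real_inner_comm] at a1
    have a2 : ‖y‖ ≤ ‖V‖ * ‖T y‖ := by
      have := V.le_opNorm (T y)
      rwa [h1] at this
    have a3 : ‖y‖ ^ 2 ≤ (‖V‖ ^ 2 + 1) * ‖T y‖ ^ 2 := by
      have := pow_le_pow_left₀ (norm_nonneg y) a2 2
      nlinarith [sq_nonneg ‖T y‖]
    have hp : 0 < ‖V‖ ^ 2 + 1 := by positivity
    rw [div_mul_eq_mul_div, div_le_iff₀ hp]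
    nlinarith

theorem half_bound {K : Type*} [NormedAddCommGroup K] [InnerProductSpace ℝ K]
    (W Wi Wh : K →L[ℝ] K) (hWh : IsSPSA Wh) (h : ∀ x, Wh (Wh x) = W x)
    (hi : ∀ x, W (Wi x) = x) (x : K) :
    ∃ p : K, Wh p = x ∧ ‖p‖ ^ 2 = ⟪x, Wi x⟫ ∧ ‖x‖ ^ 2 ≤ (‖Wh‖ ^ 2 + 1) * ‖p‖ ^ 2 := by
  have e : Wh (Wh (Wi x)) = x := by rw [h, hi]
  refine ⟨Wh (Wi x), e, ?_, ?_⟩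
  · rw [← real_inner_self_eq_norm_sq, ← hWh.1, e]
  · have a := Wh.le_opNorm (Wh (Wi x))
    rw [e] at a
    have := pow_le_pow_left₀ (norm_nonneg x) a 2
    nlinarith [sq_nonneg ‖Wh (Wi x)‖]

theorem form_bound {H G : Type*} [NormedAddCommGroup H] [InnerProductSpace ℝ H]
    [NormedAddCommGroup G] [InnerProductSpace ℝ G]
    (L : H →L[ℝ] G) (W Winv Whalf : H →L[ℝ] H) (U Uinv Uhalf : G →L[ℝ] G)
    (hWhalfSPSA : IsSPSA Whalf) (hUhalfSPSA : IsSPSA Uhalf)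
    (hWhalf : ∀ x : H, Whalf (Whalf x) = W x) (hUhalf : ∀ v : G, Uhalf (Uhalf v) = U v)
    (hWinv : ∀ x : H, W (Winv x) = x) (hUinv : ∀ v : G, U (Uinv v) = v)
    (hnorm : ‖Uhalf.comp (L.comp Whalf)‖ < 1) :
    ∃ α : ℝ, 0 < α ∧ ∀ (x : H) (v : G),
      α * (‖x‖ ^ 2 + ‖v‖ ^ 2) ≤ ⟪x, Winv x⟫ - 2 * ⟪L x, v⟫ + ⟪v, Uinv v⟫ := by
  set r := ‖Uhalf.comp (L.comp Whalf)‖ with hr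
  have hr0 : 0 ≤ r := norm_nonneg _
  set M := (‖Whalf‖ ^ 2 + 1) + (‖Uhalf‖ ^ 2 + 1) with hM
  have hM0 : 0 < M := by positivity
  refine ⟨(1 - r) / M, div_pos (by linarith) hM0, fun x v => ?_⟩
  obtain ⟨p, rfl, hp1, hp2⟩ := half_bound W Winv Whalf hWhalfSPSA hWhalf hWinv x
  obtain ⟨q, rfl, hq1, hq2⟩ := half_bound U Uinv Uhalf hUhalfSPSA hUhalf hUinv v
  rw [← hp1, ← hq1, ← hUhalfSPSA.1]
  have b1 : ⟪Uhalf (L (Whalf p)), q⟫ ≤ r * ‖p‖ * ‖q‖ :=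
    (real_inner_le_norm _ _).trans
      (mul_le_mul_of_nonneg_right ((Uhalf.comp (L.comp Whalf)).le_opNorm p) (norm_nonneg _))
  have b2 : 2 * (r * ‖p‖ * ‖q‖) ≤ r * (‖p‖ ^ 2 + ‖q‖ ^ 2) := by
    nlinarith [mul_nonneg hr0 (sq_nonneg (‖p‖ - ‖q‖))]
  have b3 : ‖Whalf p‖ ^ 2 + ‖Uhalf q‖ ^ 2 ≤ M * (‖p‖ ^ 2 + ‖q‖ ^ 2) := by
    have : 0 ≤ (‖Whalf‖ ^ 2 + 1) * ‖q‖ ^ 2 := by positivity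
    have : 0 ≤ (‖Uhalf‖ ^ 2 + 1) * ‖p‖ ^ 2 := by positivity
    rw [hM]; nlinarith
  have b4 : (1 - r) / M * (‖Whalf p‖ ^ 2 + ‖Uhalf q‖ ^ 2) ≤ (1 - r) * (‖p‖ ^ 2 + ‖q‖ ^ 2) := by
    rw [div_mul_eq_mul_div, div_le_iff₀ hM0]
    have := mul_le_mul_of_nonneg_left b3 (show 0 ≤ 1 - r by linarith)
    linarith
  linarith

/-- the operator `V' : (x,v) ↦ (W⁻¹x − L*v, −Lx + U⁻¹v)` on `H ⊕ G` is strongly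
positive self-adjoint; `W⁻¹ − L*UL` and `U⁻¹ − LWL*` are isomorphisms; and the inverse of
`V'` is `V : (x,v) ↦ ((W⁻¹ − L*UL)⁻¹x + WL*(U⁻¹ − LWL*)⁻¹v, (U⁻¹ − LWL*)⁻¹(LWx + v))`,
itself strongly positive self-adjoint. -/
theorem stmt_4
    {H : Type*} [NormedAddCommGroup H] [InnerProductSpace ℝ H] [CompleteSpace H]
    [TopologicalSpace.SeparableSpace H]
    {G : Type*} [NormedAddCommGroup G] [InnerProductSpace ℝ G] [CompleteSpace G]
    [TopologicalSpace.SeparableSpace G]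
    (L : H →L[ℝ] G)
    (W Winv Whalf : H →L[ℝ] H) (U Uinv Uhalf : G →L[ℝ] G)
    (hW : IsSPSA W) (hU : IsSPSA U)
    (hWhalfSPSA : IsSPSA Whalf) (hUhalfSPSA : IsSPSA Uhalf)
    (hWhalf : ∀ x : H, Whalf (Whalf x) = W x) (hUhalf : ∀ v : G, Uhalf (Uhalf v) = U v)
    (hWinv : ∀ x : H, W (Winv x) = x) (hWinv' : ∀ x : H, Winv (W x) = x)
    (hUinv : ∀ v : G, U (Uinv v) = v) (hUinv' : ∀ v : G, Uinv (U v) = v)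
    (hnorm : ‖Uhalf.comp (L.comp Whalf)‖ < 1)
    (V' : WithLp 2 (H × G) →L[ℝ] WithLp 2 (H × G))
    (hV'1 : ∀ z : WithLp 2 (H × G),
      (WithLp.equiv 2 (H × G) (V' z)).1
        = Winv (WithLp.equiv 2 (H × G) z).1
            - ContinuousLinearMap.adjoint L (WithLp.equiv 2 (H × G) z).2)
    (hV'2 : ∀ z : WithLp 2 (H × G),
      (WithLp.equiv 2 (H × G) (V' z)).2
        = -L (WithLp.equiv 2 (H × G) z).1 + Uinv (WithLp.equiv 2 (H × G) z).2) :
    IsSPSA V' ∧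
    ∃ T : H →L[ℝ] H, ∃ S : G →L[ℝ] G,
      (∀ x : H, (Winv - (ContinuousLinearMap.adjoint L).comp (U.comp L)) (T x) = x) ∧
      (∀ x : H, T ((Winv - (ContinuousLinearMap.adjoint L).comp (U.comp L)) x) = x) ∧
      (∀ v : G, (Uinv - L.comp (W.comp (ContinuousLinearMap.adjoint L))) (S v) = v) ∧
      (∀ v : G, S ((Uinv - L.comp (W.comp (ContinuousLinearMap.adjoint L))) v) = v) ∧
      ∃ V : WithLp 2 (H × G) →L[ℝ] WithLp 2 (H × G),
        (∀ z : WithLp 2 (H × G),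
          (WithLp.equiv 2 (H × G) (V z)).1
            = T (WithLp.equiv 2 (H × G) z).1
                + W (ContinuousLinearMap.adjoint L (S (WithLp.equiv 2 (H × G) z).2))) ∧
        (∀ z : WithLp 2 (H × G),
          (WithLp.equiv 2 (H × G) (V z)).2
            = S (L (W (WithLp.equiv 2 (H × G) z).1) + (WithLp.equiv 2 (H × G) z).2)) ∧
        (∀ z, V (V' z) = z) ∧ (∀ z, V' (V z) = z) ∧ IsSPSA V := by
  obtain ⟨α, hα, hform⟩ := form_bound L W Winv Whalf U Uinv Uhalf hWhalfSPSA hUhalfSPSA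
    hWhalf hUhalf hWinv hUinv hnorm
  have hWis : ∀ x y, ⟪Winv x, y⟫ = ⟪x, Winv y⟫ := fun x y => by
    have := hW.1 (Winv x) (Winv y)
    rw [hWinv, hWinv] at this
    exact this.symm
  have hUis : ∀ x y, ⟪Uinv x, y⟫ = ⟪x, Uinv y⟫ := fun x y => by
    have := hU.1 (Uinv x) (Uinv y)
    rw [hUinv, hUinv] at this
    exact this.symm
  have hadj : ∀ x v, ⟪x, ContinuousLinearMap.adjoint L v⟫ = ⟪L x, v⟫ := fun x v =>
    ContinuousLinearMap.adjoint_inner_right L x v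
  have hadj' : ∀ x v, ⟪ContinuousLinearMap.adjoint L v, x⟫ = ⟪v, L x⟫ := fun x v =>
    ContinuousLinearMap.adjoint_inner_left L x v
  set Ls := ContinuousLinearMap.adjoint L with hLs
  change ∀ z : WithLp 2 (H × G), (V' z).fst = Winv z.fst - Ls z.snd at hV'1
  change ∀ z : WithLp 2 (H × G), (V' z).snd = -L z.fst + Uinv z.snd at hV'2
  have hV'S : IsSPSA V' := by
    refine ⟨fun z w => ?_, α, hα, fun z => ?_⟩
    · rw [WithLp.prod_inner_apply, WithLp.prod_inner_apply]
      change ⟪(V' z).fst, w.fst⟫ + ⟪(V' z).snd, w.snd⟫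
        = ⟪z.fst, (V' w).fst⟫ + ⟪z.snd, (V' w).snd⟫
      rw [hV'1, hV'2, hV'1, hV'2]
      simp only [inner_sub_left, inner_sub_right, inner_add_left, inner_add_right,
        inner_neg_left, inner_neg_right, hadj, hadj', hWis, hUis]
      ring
    · rw [WithLp.prod_inner_apply, WithLp.prod_norm_sq_eq_of_L2]
      change α * (‖z.fst‖ ^ 2 + ‖z.snd‖ ^ 2)
        ≤ ⟪z.fst, (V' z).fst⟫ + ⟪z.snd, (V' z).snd⟫
      rw [hV'1, hV'2]
      have := hform z.fst z.snd
      simp only [inner_sub_right, inner_add_right, inner_neg_right, hadj]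
      rw [real_inner_comm (L z.fst) z.snd]
      linarith
  have hTS : IsSPSA (Winv - Ls.comp (U.comp L)) := by
    refine ⟨fun x y => ?_, α, hα, fun x => ?_⟩
    · simp [inner_sub_left, inner_sub_right, hadj, hadj', hWis, hU.1]
    · have h := hform x (U (L x))
      rw [hUinv', hU.1 (L x) (L x)] at h
      simp only [sub_apply, ContinuousLinearMap.comp_apply,
        inner_sub_right, hadj]
      nlinarith [mul_nonneg hα.le (sq_nonneg ‖U (L x)‖)]
  have hSS : IsSPSA (Uinv - L.comp (W.comp Ls)) := by
    have e : ∀ v w, ⟪L (W (Ls v)), w⟫ = ⟪v, L (W (Ls w))⟫ := fun v w => by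
      rw [← hadj, ← hadj', hW.1]
    refine ⟨fun x y => ?_, α, hα, fun v => ?_⟩
    · simp [inner_sub_left, inner_sub_right, hUis, e]
    · have h := hform (W (Ls v)) v
      rw [hWinv', hW.1 (Ls v) (Ls v), hadj', e] at h
      simp only [sub_apply, ContinuousLinearMap.comp_apply,
        inner_sub_right]
      nlinarith [mul_nonneg hα.le (sq_nonneg ‖W (Ls v)‖)]
  obtain ⟨T, hT1, hT2, -⟩ := spsa_of_inverse _ hTS
  obtain ⟨S, hS1, hS2, -⟩ := spsa_of_inverse _ hSS
  obtain ⟨V, hV1, hV2, hVS⟩ := spsa_of_inverse _ hV'S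
  refine ⟨hV'S, T, S, hT1, hT2, hS1, hS2, V, fun z => ?_, fun z => ?_, hV2, hV1, hVS⟩
  · change (V z).fst = T z.fst + W (Ls (S z.snd))
    have e1 : Winv (V z).fst - Ls (V z).snd = z.fst := by rw [← hV'1, hV1]
    have e2 : -L (V z).fst + Uinv (V z).snd = z.snd := by rw [← hV'2, hV1]
    have key : (Winv - Ls.comp (U.comp L)) ((V z).fst - W (Ls (S z.snd))) = z.fst := by
      have e3 := hS1 z.snd
      simp only [sub_apply, ContinuousLinearMap.comp_apply] at e3 ⊢
      have e4 : L (W (Ls (S z.snd))) = Uinv (S z.snd) - z.snd := by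
        rw [sub_eq_iff_eq_add] at e3
        rw [e3]
        abel
      have e5 : L (V z).fst = Uinv (V z).snd - z.snd := by rw [← e2]; abel
      rw [map_sub, map_sub L, e4, e5, hWinv', ← e1]
      simp only [map_sub, hUinv]
      abel
    rw [← key, hT2]
    abel
  · change (V z).snd = S (L (W z.fst) + z.snd)
    have e1 : Winv (V z).fst - Ls (V z).snd = z.fst := by rw [← hV'1, hV1]
    have e2 : -L (V z).fst + Uinv (V z).snd = z.snd := by rw [← hV'2, hV1]
    have key : (Uinv - L.comp (W.comp Ls)) (V z).snd = L (W z.fst) + z.snd := by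
      rw [← e1, ← e2]
      simp only [sub_apply, ContinuousLinearMap.comp_apply, map_sub, hWinv]
      abel
    rw [← key, hS2]
end

section
/- Let H and G be separable real Hilbert spaces, let L ∈ B(H, G), and let W ∈ B(H), U ∈ B(G) be strongly positive self-adjoint operators with ‖U^{1/2} L W^{1/2}‖ < 1. Let C: H → H and let D: G → 2^G have single-valued inverse D^{-1}: G → G, set R: H ⊕ G → H ⊕ G: (x, v) ↦ (C x, D^{-1} v), and let V be the strongly positive self-adjoint operator V(x, v) = ((W^{-1} − L* U L)^{-1} x + W L* (U^{-1} − L W L*)^{-1} v, (U^{-1} − L W L*)^{-1} (L W x + v)). If W^{1/2} C W^{1/2} is μ-cocoercive with μ > 0 and U^{1/2} D^{-1} U^{1/2} is ν-cocoercive with ν > 0, then for every α > 0, V^{1/2} R V^{1/2} is ϑ_α-cocoercive, where ϑ_α = (1 − ‖U^{1/2} L W^{1/2}‖²) · min{ μ (1 + α‖U^{1/2} L W^{1/2}‖)^{-1}, ν (1 + α^{-1}‖U^{1/2} L W^{1/2}‖)^{-1} }. -/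
open scoped RealInnerProductSpace

theorem key_bound {H G : Type*} [NormedAddCommGroup H] [InnerProductSpace ℝ H]
    [NormedAddCommGroup G] [InnerProductSpace ℝ G] (M : H →L[ℝ] G) (hM : ‖M‖ < 1)
    (a η : H) (b ω : G) (h1 : ‖η‖ ^ 2 = ⟪a, η⟫ + ⟪ω, M η⟫) (h2 : ω = b + M η)
    (α : ℝ) (hα : 0 < α) :
    (1 - ‖M‖ ^ 2) * (⟪a, η⟫ + ⟪b, ω⟫) ≤
      (1 + α * ‖M‖) * ‖a‖ ^ 2 + (1 + α⁻¹ * ‖M‖) * ‖b‖ ^ 2 := by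
  subst h2
  rw [inner_add_left, real_inner_self_eq_norm_sq] at h1
  rw [inner_add_right, real_inner_self_eq_norm_sq]
  have hk := norm_nonneg M
  have hMη := M.le_opNorm η
  have ha := real_inner_le_norm a η
  have hb := real_inner_le_norm b (M η)
  have hb2 : ‖b‖ * ‖M η‖ ≤ ‖b‖ * (‖M‖ * ‖η‖) :=
    mul_le_mul_of_nonneg_left hMη (norm_nonneg _)
  have hsq : ‖M η‖ ^ 2 ≤ (‖M‖ * ‖η‖) ^ 2 :=
    pow_le_pow_left₀ (norm_nonneg _) hMη 2
  generalize hs : ⟪a, η⟫ + ⟪b, M η⟫ = s at *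
  have hs1 : s ≤ (‖a‖ + ‖M‖ * ‖b‖) * ‖η‖ := by rw [← hs]; nlinarith
  have hs2 : (1 - ‖M‖ ^ 2) * ‖η‖ ^ 2 ≤ s := by nlinarith
  have hk1 : 0 < 1 - ‖M‖ ^ 2 := by nlinarith
  have hg : 0 ≤ ‖a‖ + ‖M‖ * ‖b‖ := by positivity
  have h3 : (1 - ‖M‖ ^ 2) * ‖η‖ ≤ ‖a‖ + ‖M‖ * ‖b‖ := by
    rcases (norm_nonneg η).eq_or_lt with h | h
    · rw [← h]; simpa using hg
    · have : ((1 - ‖M‖ ^ 2) * ‖η‖) * ‖η‖ ≤ (‖a‖ + ‖M‖ * ‖b‖) * ‖η‖ := by nlinarith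
      exact le_of_mul_le_mul_right this h
  have h4 : (1 - ‖M‖ ^ 2) * s ≤ (‖a‖ + ‖M‖ * ‖b‖) ^ 2 := by
    calc (1 - ‖M‖ ^ 2) * s ≤ (1 - ‖M‖ ^ 2) * ((‖a‖ + ‖M‖ * ‖b‖) * ‖η‖) :=
          mul_le_mul_of_nonneg_left hs1 hk1.le
      _ = (‖a‖ + ‖M‖ * ‖b‖) * ((1 - ‖M‖ ^ 2) * ‖η‖) := by ring
      _ ≤ (‖a‖ + ‖M‖ * ‖b‖) * (‖a‖ + ‖M‖ * ‖b‖) := mul_le_mul_of_nonneg_left h3 hg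
      _ = _ := by ring
  have h5 : 2 * (‖a‖ * ‖b‖) ≤ α * ‖a‖ ^ 2 + α⁻¹ * ‖b‖ ^ 2 := by
    have e : α * ‖a‖ ^ 2 + α⁻¹ * ‖b‖ ^ 2 - 2 * (‖a‖ * ‖b‖)
        = α⁻¹ * (α * ‖a‖ - ‖b‖) ^ 2 := by field_simp; ring
    have : 0 ≤ α⁻¹ * (α * ‖a‖ - ‖b‖) ^ 2 := by positivity
    linarith
  have h6 := mul_le_mul_of_nonneg_left h5 hk
  have e : ⟪a, η⟫ + (‖b‖ ^ 2 + ⟪b, M η⟫) = s + ‖b‖ ^ 2 := by rw [← hs]; ring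
  rw [e]
  nlinarith

/-- with `R(x,v) = (Cx, D⁻¹v)` and
`V(x,v) = ((W⁻¹ − L*UL)⁻¹x + WL*(U⁻¹ − LWL*)⁻¹v, (U⁻¹ − LWL*)⁻¹(LWx + v))`, if
`W^{1/2} C W^{1/2}` is `μ`-cocoercive and `U^{1/2} D⁻¹ U^{1/2}` is `ν`-cocoercive, then for
every `α > 0`, `V^{1/2} R V^{1/2}` is `ϑ_α`-cocoercive. -/
theorem stmt_5
    {H : Type*} [NormedAddCommGroup H] [InnerProductSpace ℝ H] [CompleteSpace H]
    [TopologicalSpace.SeparableSpace H]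
    {G : Type*} [NormedAddCommGroup G] [InnerProductSpace ℝ G] [CompleteSpace G]
    [TopologicalSpace.SeparableSpace G]
    (L : H →L[ℝ] G)
    (W Winv Whalf : H →L[ℝ] H) (U Uinv Uhalf : G →L[ℝ] G)
    (hW : IsSPSA W) (hU : IsSPSA U)
    (hWhalfSPSA : IsSPSA Whalf) (hUhalfSPSA : IsSPSA Uhalf)
    (hWhalf : ∀ x : H, Whalf (Whalf x) = W x) (hUhalf : ∀ v : G, Uhalf (Uhalf v) = U v)
    (hWinv : ∀ x : H, W (Winv x) = x) (hWinv' : ∀ x : H, Winv (W x) = x)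
    (hUinv : ∀ v : G, U (Uinv v) = v) (hUinv' : ∀ v : G, Uinv (U v) = v)
    (hnorm : ‖Uhalf.comp (L.comp Whalf)‖ < 1)
    (C : H → H) (D : G → Set G) (Dinv : G → G)
    (hDinv : ∀ u : G, {x : G | u ∈ D x} = {Dinv u})
    (μ ν : ℝ) (hμ : 0 < μ) (hν : 0 < ν)
    (hC : Cocoercive μ (fun x => Whalf (C (Whalf x))))
    (hD : Cocoercive ν (fun v => Uhalf (Dinv (Uhalf v))))
    -- `T` and `S` are the inverses of `W⁻¹ − L*UL` and `U⁻¹ − LWL*`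
    (T : H →L[ℝ] H) (S : G →L[ℝ] G)
    (hT : ∀ x : H, (Winv - (ContinuousLinearMap.adjoint L).comp (U.comp L)) (T x) = x)
    (hT' : ∀ x : H, T ((Winv - (ContinuousLinearMap.adjoint L).comp (U.comp L)) x) = x)
    (hS : ∀ v : G, (Uinv - L.comp (W.comp (ContinuousLinearMap.adjoint L))) (S v) = v)
    (hS' : ∀ v : G, S ((Uinv - L.comp (W.comp (ContinuousLinearMap.adjoint L))) v) = v)
    (V Vhalf : WithLp 2 (H × G) →L[ℝ] WithLp 2 (H × G))
    (hV1 : ∀ z : WithLp 2 (H × G),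
      (WithLp.equiv 2 (H × G) (V z)).1
        = T (WithLp.equiv 2 (H × G) z).1
            + W (ContinuousLinearMap.adjoint L (S (WithLp.equiv 2 (H × G) z).2)))
    (hV2 : ∀ z : WithLp 2 (H × G),
      (WithLp.equiv 2 (H × G) (V z)).2
        = S (L (W (WithLp.equiv 2 (H × G) z).1) + (WithLp.equiv 2 (H × G) z).2))
    (hVspsa : IsSPSA V) (hVhalfSPSA : IsSPSA Vhalf)
    (hVhalfsq : ∀ z, Vhalf (Vhalf z) = V z)
    (R : WithLp 2 (H × G) → WithLp 2 (H × G))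
    (hR : ∀ z : WithLp 2 (H × G),
      R z = (WithLp.equiv 2 (H × G)).symm
        (C (WithLp.equiv 2 (H × G) z).1, Dinv (WithLp.equiv 2 (H × G) z).2)) :
    ∀ α : ℝ, 0 < α →
      Cocoercive
        ((1 - ‖Uhalf.comp (L.comp Whalf)‖ ^ 2) *
          min (μ * (1 + α * ‖Uhalf.comp (L.comp Whalf)‖)⁻¹)
              (ν * (1 + α⁻¹ * ‖Uhalf.comp (L.comp Whalf)‖)⁻¹))
        (fun z => Vhalf (R (Vhalf z))) := by
  intro α hα z z'
  have hCc : ∀ x x' : H, μ * ‖Whalf (C x - C x')‖ ^ 2 ≤ ⟪x - x', C x - C x'⟫ := by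
    intro x x'
    have h := hC (Whalf (Winv x)) (Whalf (Winv x'))
    simp only [hWhalf, hWinv] at h
    rw [← map_sub, ← map_sub Whalf (Winv x), ← hWhalfSPSA.1, hWhalf, map_sub W, hWinv, hWinv] at h
    exact h
  have hDc : ∀ x x' : G, ν * ‖Uhalf (Dinv x - Dinv x')‖ ^ 2 ≤ ⟪x - x', Dinv x - Dinv x'⟫ := by
    intro x x'
    have h := hD (Uhalf (Uinv x)) (Uhalf (Uinv x'))
    simp only [hUhalf, hUinv] at h
    rw [← map_sub, ← map_sub Uhalf (Uinv x), ← hUhalfSPSA.1, hUhalf, map_sub U, hUinv, hUinv] at h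
    exact h
  simp only [← map_sub]
  rw [← hVhalfSPSA.1 (z - z'), map_sub Vhalf z z',
    ← real_inner_self_eq_norm_sq (Vhalf (R (Vhalf z) - R (Vhalf z'))),
    hVhalfSPSA.1 (R (Vhalf z) - R (Vhalf z')), hVhalfsq]
  generalize Vhalf z = p
  generalize Vhalf z' = p'
  have hc := hCc p.fst p'.fst
  have hd := hDc p.snd p'.snd
  have hq1 : (R p - R p').fst = C p.fst - C p'.fst := by rw [hR, hR]; rfl
  have hq2 : (R p - R p').snd = Dinv p.snd - Dinv p'.snd := by rw [hR, hR]; rfl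
  rw [← hq1] at hc
  rw [← hq2] at hd
  generalize R p - R p' = q at *
  rw [WithLp.prod_inner_apply, WithLp.prod_inner_apply]
  change _ * (⟪q.fst, (V q).fst⟫ + ⟪q.snd, (V q).snd⟫)
    ≤ ⟪p.fst - p'.fst, q.fst⟫ + ⟪p.snd - p'.snd, q.snd⟫
  have hy : (V q).fst = T q.fst + W (ContinuousLinearMap.adjoint L (S q.snd)) := hV1 q
  have hw : (V q).snd = S (L (W q.fst) + q.snd) := hV2 q
  generalize (V q).fst = y at *
  generalize (V q).snd = w at *
  generalize q.fst = c at *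
  generalize q.snd = d at *
  have hULT : U (L (T c)) = S (L (W c)) := by
    have h := hS' (U (L (T c)))
    have h' := congrArg (fun t => L (W t)) (hT c)
    simp only [sub_apply, ContinuousLinearMap.comp_apply, map_sub, hWinv,
      hUinv'] at h h'
    rw [← h', map_sub, h]
  have e1 : Winv y = c + ContinuousLinearMap.adjoint L w := by
    have h := hT c
    simp only [sub_apply, ContinuousLinearMap.comp_apply] at h
    rw [hy, hw]
    simp only [map_add, hWinv']
    rw [← hULT, ← add_assoc, sub_eq_iff_eq_add.1 h]
  have e2 : Uinv w = d + L y := by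
    have h := hS d
    simp only [sub_apply, ContinuousLinearMap.comp_apply] at h
    rw [hy, hw]
    simp only [map_add]
    rw [← hULT, hUinv', sub_eq_iff_eq_add.1 h]
    abel
  have ey : Whalf (Whalf (Winv y)) = y := by rw [hWhalf, hWinv]
  have ew : Uhalf (Uhalf (Uinv w)) = w := by rw [hUhalf, hUinv]
  have hM : (Uhalf.comp (L.comp Whalf)) (Whalf (Winv y)) = Uhalf (L y) := by
    simp only [ContinuousLinearMap.comp_apply, ey]
  have key := key_bound (Uhalf.comp (L.comp Whalf)) hnorm (Whalf c) (Whalf (Winv y))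
    (Uhalf d) (Uhalf (Uinv w))
    (by
      rw [hM, ← real_inner_self_eq_norm_sq, hWhalfSPSA.1, hWhalfSPSA.1, ey, ← hUhalfSPSA.1, ew,
        e1, inner_add_left, ContinuousLinearMap.adjoint_inner_left])
    (by rw [hM, e2, map_add]) α hα
  rw [hWhalfSPSA.1, hUhalfSPSA.1, ey, ew] at key
  have hk := norm_nonneg (Uhalf.comp (L.comp Whalf))
  generalize ‖Uhalf.comp (L.comp Whalf)‖ = k at *
  have p1 : 0 < 1 + α * k := by positivity
  have p2 : 0 < 1 + α⁻¹ * k := by positivity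
  generalize hm : min (μ * (1 + α * k)⁻¹) (ν * (1 + α⁻¹ * k)⁻¹) = m
  have m0 : 0 ≤ m := by rw [← hm]; positivity
  have m1 : m * (1 + α * k) ≤ μ := by
    rw [← le_div_iff₀ p1, ← hm, div_eq_mul_inv]; exact min_le_left _ _
  have m2 : m * (1 + α⁻¹ * k) ≤ ν := by
    rw [← le_div_iff₀ p2, ← hm, div_eq_mul_inv]; exact min_le_right _ _
  have k1 := mul_le_mul_of_nonneg_left key m0
  have k2 := mul_le_mul_of_nonneg_right m1 (sq_nonneg ‖Whalf c‖)
  have k3 := mul_le_mul_of_nonneg_right m2 (sq_nonneg ‖Uhalf d‖)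
  linarith
end

section
/- Let μ > 0, ν > 0 and c > 0. The function φ: (0, ∞) → ℝ defined by φ(α) = min{ μ (1 + α c)^{-1}, ν (1 + α^{-1} c)^{-1} } attains its maximum over (0, ∞) at α̂ = ( μ − ν + √((μ − ν)² + 4 μ ν c²) ) / (2 ν c); that is, for every α > 0, φ(α) ≤ φ(α̂). -/
/-- the function `φ(α) = min{ μ/(1 + α c), ν/(1 + c/α) }` on `(0, ∞)` attains
its maximum at `α̂ = (μ − ν + √((μ − ν)² + 4 μ ν c²)) / (2 ν c)`. -/
theorem stmt_7 (μ ν c : ℝ) (hμ : 0 < μ) (hν : 0 < ν) (hc : 0 < c) :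
    ∀ α : ℝ, 0 < α →
      min (μ * (1 + α * c)⁻¹) (ν * (1 + α⁻¹ * c)⁻¹)
        ≤ min (μ * (1 + ((μ - ν + Real.sqrt ((μ - ν) ^ 2 + 4 * μ * ν * c ^ 2)) / (2 * ν * c)) * c)⁻¹)
            (ν * (1 + ((μ - ν + Real.sqrt ((μ - ν) ^ 2 + 4 * μ * ν * c ^ 2)) / (2 * ν * c))⁻¹ * c)⁻¹) := by
  intro α hα
  have hpos : 0 < (μ - ν) ^ 2 + 4 * μ * ν * c ^ 2 := by positivity
  have hs := Real.sq_sqrt hpos.le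
  have hlt : |μ - ν| < Real.sqrt ((μ - ν) ^ 2 + 4 * μ * ν * c ^ 2) := by
    rw [← Real.sqrt_sq_eq_abs]
    apply Real.sqrt_lt_sqrt (sq_nonneg _)
    have : 0 < 4 * μ * ν * c ^ 2 := by positivity
    linarith
  have hab := neg_abs_le (μ - ν)
  generalize Real.sqrt ((μ - ν) ^ 2 + 4 * μ * ν * c ^ 2) = s at *
  have ha : 0 < (μ - ν + s) / (2 * ν * c) := by
    apply div_pos
    · linarith
    · positivity
  have hq : μ * (((μ - ν + s) / (2 * ν * c)) + c)
      = ν * ((μ - ν + s) / (2 * ν * c)) * (1 + ((μ - ν + s) / (2 * ν * c)) * c) := by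
    field_simp
    linear_combination (-1) * hs
  generalize (μ - ν + s) / (2 * ν * c) = a at *
  have heq : μ * (1 + a * c)⁻¹ = ν * (1 + a⁻¹ * c)⁻¹ := by
    have e : 1 + a⁻¹ * c = (a + c) / a := by field_simp
    have h1 : 0 < 1 + a * c := by positivity
    have h2 : 0 < a + c := by positivity
    rw [e, inv_div, ← div_eq_mul_inv, mul_div_assoc', div_eq_div_iff h1.ne' h2.ne']
    exact hq
  rcases le_total a α with h | h
  · rw [← heq, min_self]
    refine (min_le_left _ _).trans ?_
    gcongr
  · rw [heq, min_self]
    refine (min_le_right _ _).trans ?_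
    gcongr
end

section
/- Let H and G be separable real Hilbert spaces, let A: H → 2^H and B: G → 2^G be maximally monotone, let C: H → H, let D: G → 2^G have single-valued inverse D^{-1}: G → G, and let L ∈ B(H, G). On K = H ⊕ G define Q(x, v) = (A x + L* v) × (−L x + B^{-1} v) and R(x, v) = (C x, D^{-1} v). Let W ∈ B(H) and U ∈ B(G) be strongly positive self-adjoint with ‖U^{1/2} L W^{1/2}‖ < 1, and let V(x, v) = ((W^{-1} − L* U L)^{-1} x + W L* (U^{-1} − L W L*)^{-1} v, (U^{-1} − L W L*)^{-1} (L W x + v)). Fix z = (x, v) ∈ K and (c, e) ∈ K, and set y = J_{W A}( x − W (L* v + C x + c) ) and u = J_{U B^{-1}}( v + U (L (2y − x) − D^{-1} v + e) ). Then (y, u) = J_{V Q}( z − V R z + s ), where s = ( (W^{-1} − L* U L)^{-1} (L* U e − c), (U^{-1} − L W L*)^{-1} (e − L W c) ). -/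
open Pointwise
open scoped RealInnerProductSpace

/-- Monotonicity of a set-valued operator. -/
def IsMono {K : Type*} [NormedAddCommGroup K] [InnerProductSpace ℝ K]
    (A : K → Set K) : Prop :=
  ∀ ⦃x y u v : K⦄, u ∈ A x → v ∈ A y → (0 : ℝ) ≤ ⟪x - y, u - v⟫

/-- Maximal monotonicity of a set-valued operator. -/
def IsMaxMono {K : Type*} [NormedAddCommGroup K] [InnerProductSpace ℝ K]
    (A : K → Set K) : Prop :=
  IsMono A ∧ ∀ B : K → Set K, IsMono B → (∀ x, A x ⊆ B x) → B = A

/-- The set-valued inverse. -/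
def svInv {K : Type*} (A : K → Set K) : K → Set K := fun u => {x | u ∈ A x}

/-- with `Q(x,v) = (Ax + L*v) × (−Lx + B⁻¹v)`, `R(x,v) = (Cx, D⁻¹v)` and `V` the
preconditioner of the first algorithm subclass, the point `(y, u)` computed by the
primal-dual update is exactly `J_{VQ}(z − VRz + s)` for the stated error `s`. -/
theorem stmt_8
    {H : Type*} [NormedAddCommGroup H] [InnerProductSpace ℝ H] [CompleteSpace H]
    [TopologicalSpace.SeparableSpace H]
    {G : Type*} [NormedAddCommGroup G] [InnerProductSpace ℝ G] [CompleteSpace G]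
    [TopologicalSpace.SeparableSpace G]
    (A : H → Set H) (hA : IsMaxMono A) (B : G → Set G) (hB : IsMaxMono B)
    (C : H → H) (D : G → Set G) (Dinv : G → G)
    (hDinv : ∀ u : G, {x : G | u ∈ D x} = {Dinv u})
    (L : H →L[ℝ] G)
    (W Winv Whalf : H →L[ℝ] H) (U Uinv Uhalf : G →L[ℝ] G)
    (hW : IsSPSA W) (hU : IsSPSA U)
    (hWhalfSPSA : IsSPSA Whalf) (hUhalfSPSA : IsSPSA Uhalf)
    (hWhalf : ∀ x : H, Whalf (Whalf x) = W x) (hUhalf : ∀ v : G, Uhalf (Uhalf v) = U v)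
    (hWinv : ∀ x : H, W (Winv x) = x) (hWinv' : ∀ x : H, Winv (W x) = x)
    (hUinv : ∀ v : G, U (Uinv v) = v) (hUinv' : ∀ v : G, Uinv (U v) = v)
    (hnorm : ‖Uhalf.comp (L.comp Whalf)‖ < 1)
    -- `T` and `S` are the inverses of `W⁻¹ − L*UL` and `U⁻¹ − LWL*`
    (T : H →L[ℝ] H) (S : G →L[ℝ] G)
    (hT : ∀ x : H, (Winv - (ContinuousLinearMap.adjoint L).comp (U.comp L)) (T x) = x)
    (hT' : ∀ x : H, T ((Winv - (ContinuousLinearMap.adjoint L).comp (U.comp L)) x) = x)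
    (hS : ∀ v : G, (Uinv - L.comp (W.comp (ContinuousLinearMap.adjoint L))) (S v) = v)
    (hS' : ∀ v : G, S ((Uinv - L.comp (W.comp (ContinuousLinearMap.adjoint L))) v) = v)
    (V : WithLp 2 (H × G) →L[ℝ] WithLp 2 (H × G))
    (hV1 : ∀ z : WithLp 2 (H × G),
      (WithLp.equiv 2 (H × G) (V z)).1
        = T (WithLp.equiv 2 (H × G) z).1
            + W (ContinuousLinearMap.adjoint L (S (WithLp.equiv 2 (H × G) z).2)))
    (hV2 : ∀ z : WithLp 2 (H × G),
      (WithLp.equiv 2 (H × G) (V z)).2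
        = S (L (W (WithLp.equiv 2 (H × G) z).1) + (WithLp.equiv 2 (H × G) z).2))
    (R : WithLp 2 (H × G) → WithLp 2 (H × G))
    (hR : ∀ z : WithLp 2 (H × G),
      R z = (WithLp.equiv 2 (H × G)).symm
        (C (WithLp.equiv 2 (H × G) z).1, Dinv (WithLp.equiv 2 (H × G) z).2))
    -- the fixed points and errors
    (x : H) (v : G) (c : H) (e : G)
    -- `y = J_{WA}(x − W(L*v + Cx + c))`, characterized through the inclusion
    (y : H) (hy : ∃ a ∈ A y, x - W (ContinuousLinearMap.adjoint L v + C x + c) = y + W a)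
    -- `u = J_{UB⁻¹}(v + U(L(2y − x) − D⁻¹v + e))`
    (u : G) (hu : ∃ b ∈ svInv B u,
      v + U (L ((2 : ℝ) • y - x) - Dinv v + e) = u + U b) :
    -- conclusion: `(y,u) = J_{VQ}(z − VRz + s)`, i.e. `z − VRz + s ∈ (y,u) + V(Q(y,u))`
    ∃ qq : WithLp 2 (H × G),
      (WithLp.equiv 2 (H × G) qq).1 ∈ A y + {ContinuousLinearMap.adjoint L u} ∧
      (WithLp.equiv 2 (H × G) qq).2 ∈ {-(L y)} + svInv B u ∧
      (WithLp.equiv 2 (H × G)).symm (x, v)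
          - V (R ((WithLp.equiv 2 (H × G)).symm (x, v)))
          + (WithLp.equiv 2 (H × G)).symm
              (T (ContinuousLinearMap.adjoint L (U e) - c), S (e - L (W c)))
        = (WithLp.equiv 2 (H × G)).symm (y, u) + V qq := by
  set Ls := ContinuousLinearMap.adjoint L with hLs
  obtain ⟨a, ha, hya⟩ := hy
  obtain ⟨b, hb, hub⟩ := hu
  have hS1 : ∀ g : G, Uinv (S g) - L (W (Ls (S g))) = g := fun g => by simpa using hS g
  have hS2 : ∀ g : G, S (Uinv g - L (W (Ls g))) = g := fun g => by simpa using hS' g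
  have hT2 : ∀ g : H, T (Winv g - Ls (U (L g))) = g := fun g => by simpa using hT' g
  have key : ∀ g : G, T (Ls (U g)) = W (Ls (S g)) := by
    intro g
    have h1 := hT2 (W (Ls (S g)))
    have h2 : U g = S g - U (L (W (Ls (S g)))) := by
      conv_lhs => rw [← hS1 g]
      rw [map_sub, hUinv]
    rw [hWinv'] at h1
    rw [h2, map_sub, h1]
  have hp : a + Ls u + C x + c = Winv (x - y) - Ls (v - u) := by
    have h : x - y = W (a + Ls v + C x + c) := by
      have h3 : x = y + W a + W (Ls v + C x + c) := by rw [← hya]; abel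
      have h4 : a + Ls v + C x + c = a + (Ls v + C x + c) := by abel
      rw [h4, map_add]
      nth_rewrite 1 [h3]
      abel
    rw [h, hWinv', map_sub]; abel
  have hq : -(L y) + b + Dinv v - e = Uinv (v - u) - L (x - y) := by
    have h : v - u = U (b - (L ((2 : ℝ) • y - x) - Dinv v + e)) := by
      rw [map_sub, sub_eq_sub_iff_add_eq_add, hub]; abel
    rw [h, hUinv', map_sub, map_sub, map_smul, two_smul]; abel
  have e1 : T (a + Ls u + C x + c) + W (Ls (S (-(L y) + b + Dinv v - e))) = x - y := by
    rw [hp, hq, ← key, ← map_add]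
    conv_rhs => rw [← hT2 (x - y)]
    congr 1
    rw [map_sub U, hUinv, map_sub Ls (v - u)]; abel
  have e2 : S (L (W (a + Ls u + C x + c)) + (-(L y) + b + Dinv v - e)) = v - u := by
    rw [hp, hq]
    conv_rhs => rw [← hS2 (v - u)]
    congr 1
    rw [map_sub W, hWinv, map_sub L (x - y)]; abel
  refine ⟨(WithLp.equiv 2 (H × G)).symm (a + Ls u, -(L y) + b), ?_, ?_, ?_⟩
  · exact Set.add_mem_add ha (Set.mem_singleton _)
  · exact Set.add_mem_add (Set.mem_singleton _) hb
  · apply (WithLp.equiv 2 (H × G)).injective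
    apply Prod.ext
    · have v1 := hV1 (R ((WithLp.equiv 2 (H × G)).symm (x, v)))
      have v2 := hV1 ((WithLp.equiv 2 (H × G)).symm (a + Ls u, -(L y) + b))
      rw [hR] at v1
      simp only [Equiv.apply_symm_apply] at v1 v2
      change x - (WithLp.equiv 2 (H × G) (V (R ((WithLp.equiv 2 (H × G)).symm (x, v))))).1
        + T (Ls (U e) - c) = y + (WithLp.equiv 2 (H × G) (V _)).1
      rw [hR]
      simp only [Equiv.apply_symm_apply]
      rw [v1, v2, map_sub T, key]
      simp only [map_add, map_sub, map_neg] at e1 ⊢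
      rw [← sub_eq_zero] at e1 ⊢
      rw [← neg_eq_zero, ← e1]
      abel
    · have v1 := hV2 (R ((WithLp.equiv 2 (H × G)).symm (x, v)))
      have v2 := hV2 ((WithLp.equiv 2 (H × G)).symm (a + Ls u, -(L y) + b))
      rw [hR] at v1
      simp only [Equiv.apply_symm_apply] at v1 v2
      change v - (WithLp.equiv 2 (H × G) (V (R ((WithLp.equiv 2 (H × G)).symm (x, v))))).2
        + S (e - L (W c)) = u + (WithLp.equiv 2 (H × G) (V _)).2
      rw [hR]
      simp only [Equiv.apply_symm_apply]
      rw [v1, v2]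
      simp only [map_add, map_sub, map_neg] at e2 ⊢
      rw [← sub_eq_zero] at e2 ⊢
      rw [← neg_eq_zero, ← e2]
      abel
end

section
/- Let H and G be separable real Hilbert spaces, let L ∈ B(H, G), and let W ∈ B(H), U ∈ B(G) be strongly positive self-adjoint with ‖U^{1/2} L W^{1/2}‖ < 1. Then: (i) the operator V: H ⊕ G → H ⊕ G: (x, v) ↦ (W x, (U^{-1} − L W L*)^{-1} v) is a strongly positive self-adjoint bounded operator; (ii) if moreover C: H → H is such that W^{1/2} C W^{1/2} is μ-cocoercive (μ > 0), D: G → 2^G has single-valued inverse D^{-1}: G → G with U^{1/2} D^{-1} U^{1/2} ν-cocoercive (ν > 0), and R(x, v) = (C x, D^{-1} v), then V^{1/2} R V^{1/2} is ϑ-cocoercive with ϑ = min{ μ, ν (1 − ‖U^{1/2} L W^{1/2}‖²) }. -/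
open scoped RealInnerProductSpace

theorem aux_S {G : Type*} [NormedAddCommGroup G] [InnerProductSpace ℝ G]
    (A S U' : G →L[ℝ] G) (s : ℝ) (hs : 0 < s)
    (hA : ∀ x y : G, ⟪A x, y⟫ = ⟪x, A y⟫)
    (hU' : ∀ x y : G, ⟪U' x, y⟫ = ⟪x, U' y⟫)
    (hsurj : ∀ v : G, ∃ w, U' w = v)
    (hlow : ∀ w, s * ‖w‖ ^ 2 ≤ ⟪U' w, A (U' w)⟫)
    (hAS : ∀ v, A (S v) = v) :
    (∀ x y, ⟪S x, y⟫ = ⟪x, S y⟫) ∧ (∀ b, 0 ≤ ⟪b, S b⟫) ∧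
      (∀ b, s * ⟪b, S b⟫ ≤ ‖U' b‖ ^ 2) := by
  have key : ∀ b, ∃ w, U' w = S b ∧ s * ‖w‖ ^ 2 ≤ ⟪b, S b⟫ := by
    intro b
    obtain ⟨w, hw⟩ := hsurj (S b)
    refine ⟨w, hw, ?_⟩
    have h := hlow w
    rw [hw, hAS, real_inner_comm] at h
    exact h
  refine ⟨?_, ?_, ?_⟩
  · intro x y
    have h := hA (S x) (S y)
    rw [hAS, hAS] at h
    exact h.symm
  · intro b
    obtain ⟨w, hw, h⟩ := key b
    have : 0 ≤ s * ‖w‖ ^ 2 := by positivity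
    linarith
  · intro b
    obtain ⟨w, hw, h⟩ := key b
    have h1 : 0 ≤ ‖U' b - s • w‖ ^ 2 := by positivity
    rw [norm_sub_sq_real, inner_smul_right, hU', hw, norm_smul, Real.norm_eq_abs, mul_pow,
      sq_abs] at h1
    nlinarith [mul_le_mul_of_nonneg_left h hs.le]

/-- (i) the operator `V : (x,v) ↦ (Wx, (U⁻¹ − LWL*)⁻¹v)` is a strongly
positive self-adjoint bounded operator on `H ⊕ G`; (ii) if `W^{1/2} C W^{1/2}` is
`μ`-cocoercive and `U^{1/2} D⁻¹ U^{1/2}` is `ν`-cocoercive and `R(x,v) = (Cx, D⁻¹v)`, then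
`V^{1/2} R V^{1/2}` is `ϑ`-cocoercive with `ϑ = min{μ, ν(1 − ‖U^{1/2}LW^{1/2}‖²)}`. -/
theorem stmt_12
    {H : Type*} [NormedAddCommGroup H] [InnerProductSpace ℝ H] [CompleteSpace H]
    [TopologicalSpace.SeparableSpace H]
    {G : Type*} [NormedAddCommGroup G] [InnerProductSpace ℝ G] [CompleteSpace G]
    [TopologicalSpace.SeparableSpace G]
    (L : H →L[ℝ] G)
    (W Winv Whalf : H →L[ℝ] H) (U Uinv Uhalf : G →L[ℝ] G)
    (hW : IsSPSA W) (hU : IsSPSA U)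
    (hWhalfSPSA : IsSPSA Whalf) (hUhalfSPSA : IsSPSA Uhalf)
    (hWhalf : ∀ x : H, Whalf (Whalf x) = W x) (hUhalf : ∀ v : G, Uhalf (Uhalf v) = U v)
    (hWinv : ∀ x : H, W (Winv x) = x) (hWinv' : ∀ x : H, Winv (W x) = x)
    (hUinv : ∀ v : G, U (Uinv v) = v) (hUinv' : ∀ v : G, Uinv (U v) = v)
    (hnorm : ‖Uhalf.comp (L.comp Whalf)‖ < 1) :
    (∃ S : G →L[ℝ] G,
      (∀ v : G, (Uinv - L.comp (W.comp (ContinuousLinearMap.adjoint L))) (S v) = v) ∧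
      (∀ v : G, S ((Uinv - L.comp (W.comp (ContinuousLinearMap.adjoint L))) v) = v) ∧
      ∃ V : WithLp 2 (H × G) →L[ℝ] WithLp 2 (H × G),
        (∀ z : WithLp 2 (H × G),
          (WithLp.equiv 2 (H × G) (V z)).1 = W (WithLp.equiv 2 (H × G) z).1) ∧
        (∀ z : WithLp 2 (H × G),
          (WithLp.equiv 2 (H × G) (V z)).2 = S (WithLp.equiv 2 (H × G) z).2) ∧
        IsSPSA V) ∧
    (∀ S : G →L[ℝ] G,
      (∀ v : G, (Uinv - L.comp (W.comp (ContinuousLinearMap.adjoint L))) (S v) = v) →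
      (∀ v : G, S ((Uinv - L.comp (W.comp (ContinuousLinearMap.adjoint L))) v) = v) →
      ∀ V Vhalf : WithLp 2 (H × G) →L[ℝ] WithLp 2 (H × G),
        (∀ z : WithLp 2 (H × G),
          (WithLp.equiv 2 (H × G) (V z)).1 = W (WithLp.equiv 2 (H × G) z).1) →
        (∀ z : WithLp 2 (H × G),
          (WithLp.equiv 2 (H × G) (V z)).2 = S (WithLp.equiv 2 (H × G) z).2) →
        IsSPSA Vhalf → (∀ z, Vhalf (Vhalf z) = V z) →
        ∀ (C : H → H) (D : G → Set G) (Dinv : G → G),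
          (∀ u : G, {x : G | u ∈ D x} = {Dinv u}) →
          ∀ μ ν : ℝ, 0 < μ → 0 < ν →
            Cocoercive μ (fun x => Whalf (C (Whalf x))) →
            Cocoercive ν (fun v => Uhalf (Dinv (Uhalf v))) →
            ∀ R : WithLp 2 (H × G) → WithLp 2 (H × G),
              (∀ z : WithLp 2 (H × G),
                R z = (WithLp.equiv 2 (H × G)).symm
                  (C (WithLp.equiv 2 (H × G) z).1, Dinv (WithLp.equiv 2 (H × G) z).2)) →
              Cocoercive
                (min μ (ν * (1 - ‖Uhalf.comp (L.comp Whalf)‖ ^ 2)))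
                (fun z => Vhalf (R (Vhalf z)))) := by
  classical
  set A : G →L[ℝ] G := Uinv - L.comp (W.comp (ContinuousLinearMap.adjoint L)) with hAdef
  set T : H →L[ℝ] G := Uhalf.comp (L.comp Whalf) with hT
  set s : ℝ := 1 - ‖T‖ ^ 2 with hsdef
  have hs : 0 < s := by
    have := norm_nonneg T
    rw [hsdef]; nlinarith
  obtain ⟨hUs, -⟩ := hU
  obtain ⟨hWs, αW, hαW, hWc⟩ := hW
  obtain ⟨hUhs, -⟩ := hUhalfSPSA
  obtain ⟨hWhs, -⟩ := hWhalfSPSA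
  have hWsurj : ∀ x : H, ∃ w, Whalf w = x := fun x =>
    ⟨Whalf (Winv x), by rw [hWhalf, hWinv]⟩
  have hUsurj : ∀ x : G, ∃ w, Uhalf w = x := fun x =>
    ⟨Uhalf (Uinv x), by rw [hUhalf, hUinv]⟩
  have hUinvs : ∀ x y : G, ⟪Uinv x, y⟫ = ⟪x, Uinv y⟫ := by
    intro x y
    have h := hUs (Uinv x) (Uinv y)
    rw [hUinv, hUinv] at h
    exact h.symm
  have hAs : ∀ x y : G, ⟪A x, y⟫ = ⟪x, A y⟫ := by
    intro x y
    simp only [hAdef, sub_apply, ContinuousLinearMap.comp_apply, inner_sub_left, inner_sub_right]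
    rw [hUinvs, ← ContinuousLinearMap.adjoint_inner_right, hWs,
      ContinuousLinearMap.adjoint_inner_left]
  have hlow : ∀ w, s * ‖w‖ ^ 2 ≤ ⟪Uhalf w, A (Uhalf w)⟫ := by
    intro w
    have e1 : ⟪Uhalf w, Uinv (Uhalf w)⟫ = ‖w‖ ^ 2 := by
      obtain ⟨w', rfl⟩ := hUsurj w
      rw [hUhalf, hUinv', ← hUhalf, hUhs, real_inner_self_eq_norm_sq]
    have e2 : ⟪Uhalf w, L (W (ContinuousLinearMap.adjoint L (Uhalf w)))⟫
        = ‖ContinuousLinearMap.adjoint T w‖ ^ 2 := by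
      have : ContinuousLinearMap.adjoint T w
          = Whalf (ContinuousLinearMap.adjoint L (Uhalf w)) := by
        refine ext_inner_right ℝ fun x => ?_
        rw [ContinuousLinearMap.adjoint_inner_left, hWhs, ContinuousLinearMap.adjoint_inner_left,
          hUhs]
        rfl
      rw [this, ← real_inner_self_eq_norm_sq, hWhs, hWhalf,
        ContinuousLinearMap.adjoint_inner_left]
    have e3 : ‖ContinuousLinearMap.adjoint T w‖ ≤ ‖T‖ * ‖w‖ := by
      have := (ContinuousLinearMap.adjoint T).le_opNorm w
      rwa [LinearIsometryEquiv.norm_map] at this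
    have e4 : ‖ContinuousLinearMap.adjoint T w‖ ^ 2 ≤ (‖T‖ * ‖w‖) ^ 2 :=
      pow_le_pow_left₀ (norm_nonneg _) e3 2
    have e5 : ⟪Uhalf w, A (Uhalf w)⟫ = ‖w‖ ^ 2 - ‖ContinuousLinearMap.adjoint T w‖ ^ 2 := by
      rw [← e1, ← e2, ← inner_sub_right]
      rfl
    rw [e5, hsdef]
    nlinarith
  constructor
  · have hcoer : ∃ c : ℝ, 0 < c ∧ ∀ v, c * ‖v‖ ^ 2 ≤ ⟪v, A v⟫ := by
      refine ⟨s / (‖Uhalf‖ + 1) ^ 2, by positivity, fun v => ?_⟩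
      obtain ⟨w, rfl⟩ := hUsurj v
      refine le_trans ?_ (hlow w)
      rw [div_mul_eq_mul_div, div_le_iff₀ (by positivity), mul_assoc]
      refine mul_le_mul_of_nonneg_left ?_ hs.le
      rw [← mul_pow]
      refine pow_le_pow_left₀ (norm_nonneg _) ?_ 2
      have := Uhalf.le_opNorm w
      nlinarith [norm_nonneg w]
    obtain ⟨c, hc, hcA⟩ := hcoer
    have hunit : IsUnit A := by
      refine ContinuousLinearMap.isUnit_of_forall_le_norm_inner_map A (c := ⟨c, hc.le⟩) hc ?_
      intro v
      have h := hcA v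
      rw [real_inner_comm] at h
      refine le_trans ?_ (le_trans h (le_abs_self _))
      exact le_of_eq (by rw [mul_comm]; rfl)
    obtain ⟨u, hu⟩ := hunit
    have hAS : ∀ v, A ((↑u⁻¹ : G →L[ℝ] G) v) = v := fun v => by
      rw [← hu, ← mul_apply_eq_comp, Units.mul_inv]; rfl
    have hSA : ∀ v, (↑u⁻¹ : G →L[ℝ] G) (A v) = v := fun v => by
      rw [← hu, ← mul_apply_eq_comp, Units.inv_mul]; rfl
    generalize (↑u⁻¹ : G →L[ℝ] G) = S at hAS hSA
    obtain ⟨hSs, hSpos, -⟩ := aux_S A S Uhalf s hs hAs hUhs hUsurj hlow hAS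
    have hScoer : ∃ d : ℝ, 0 < d ∧ ∀ v, d * ‖v‖ ^ 2 ≤ ⟪v, S v⟫ := by
      refine ⟨c / (‖A‖ + 1) ^ 2, by positivity, fun v => ?_⟩
      have h := hcA (S v)
      rw [hAS, real_inner_comm] at h
      refine le_trans ?_ h
      rw [div_mul_eq_mul_div, div_le_iff₀ (by positivity), mul_assoc]
      refine mul_le_mul_of_nonneg_left ?_ hc.le
      rw [← mul_pow]
      refine pow_le_pow_left₀ (norm_nonneg _) ?_ 2
      have := A.le_opNorm (S v)
      rw [hAS] at this
      nlinarith [norm_nonneg (S v)]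
    obtain ⟨d, hd, hSc⟩ := hScoer
    refine ⟨S, hAS, hSA, ?_⟩
    let e := WithLp.prodContinuousLinearEquiv 2 ℝ H G
    refine ⟨(e.symm : H × G →L[ℝ] WithLp 2 (H × G)).comp
      ((W.prodMap S).comp (e : WithLp 2 (H × G) →L[ℝ] H × G)), fun z => rfl, fun z => rfl, ?_, ?_⟩
    · intro x y
      rw [WithLp.prod_inner_apply, WithLp.prod_inner_apply]
      exact congrArg₂ (· + ·) (hWs _ _) (hSs _ _)
    · refine ⟨min αW d, lt_min hαW hd, fun z => ?_⟩
      rw [WithLp.prod_inner_apply, WithLp.prod_norm_sq_eq_of_L2, mul_add]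
      refine add_le_add (le_trans ?_ (hWc z.fst)) (le_trans ?_ (hSc z.snd))
      · exact mul_le_mul_of_nonneg_right (min_le_left _ _) (by positivity)
      · exact mul_le_mul_of_nonneg_right (min_le_right _ _) (by positivity)
  · intro S hAS hSA V Vhalf hV1 hV2 hVh hVV C D Dinv _ μ ν hμ hν hC hD R hR
    obtain ⟨hSs, hSpos, hSle⟩ := aux_S A S Uhalf s hs hAs hUhs hUsurj hlow hAS
    obtain ⟨hVhs, -⟩ := hVh
    have hC' : ∀ x y : H, μ * ⟪C x - C y, W (C x - C y)⟫ ≤ ⟪x - y, C x - C y⟫ := by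
      intro x y
      obtain ⟨x, rfl⟩ := hWsurj x
      obtain ⟨y, rfl⟩ := hWsurj y
      have h := hC x y
      simp only [← map_sub] at h
      rw [← hWhs, ← real_inner_self_eq_norm_sq, hWhs, hWhalf, map_sub Whalf x y] at h
      exact h
    have hD' : ∀ x y : G, ν * ‖Uhalf (Dinv x - Dinv y)‖ ^ 2 ≤ ⟪x - y, Dinv x - Dinv y⟫ := by
      intro x y
      obtain ⟨x, rfl⟩ := hUsurj x
      obtain ⟨y, rfl⟩ := hUsurj y
      have h := hD x y
      simp only [← map_sub] at h
      rw [← hUhs, map_sub Uhalf x y] at h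
      exact h
    intro z₁ z₂
    simp only [← map_sub]
    rw [← hVhs, ← real_inner_self_eq_norm_sq, hVhs, hVV, map_sub Vhalf z₁ z₂]
    generalize Vhalf z₁ = y₁
    generalize Vhalf z₂ = y₂
    rw [WithLp.prod_inner_apply, WithLp.prod_inner_apply]
    have c1 := hC' y₁.fst y₂.fst
    have d1 := hD' y₁.snd y₂.snd
    have d2 := hSle (Dinv y₁.snd - Dinv y₂.snd)
    have d3 := hSpos (Dinv y₁.snd - Dinv y₂.snd)
    have c3 : 0 ≤ ⟪C y₁.fst - C y₂.fst, W (C y₁.fst - C y₂.fst)⟫ :=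
      le_trans (by positivity) (hWc _)
    have f1 : (V (R y₁ - R y₂)).fst = W (C y₁.fst - C y₂.fst) := by
      have := hV1 (R y₁ - R y₂)
      rw [hR, hR] at this ⊢
      exact this
    have f2 : (V (R y₁ - R y₂)).snd = S (Dinv y₁.snd - Dinv y₂.snd) := by
      have := hV2 (R y₁ - R y₂)
      rw [hR, hR] at this ⊢
      exact this
    have g1 : (R y₁ - R y₂).fst = C y₁.fst - C y₂.fst := by rw [hR, hR]; rfl
    have g2 : (R y₁ - R y₂).snd = Dinv y₁.snd - Dinv y₂.snd := by rw [hR, hR]; rfl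
    change _ * (⟪(R y₁ - R y₂).fst, (V (R y₁ - R y₂)).fst⟫
      + ⟪(R y₁ - R y₂).snd, (V (R y₁ - R y₂)).snd⟫) ≤
      ⟪y₁.fst - y₂.fst, (R y₁ - R y₂).fst⟫ + ⟪y₁.snd - y₂.snd, (R y₁ - R y₂).snd⟫
    rw [f1, f2, g1, g2, mul_add]
    refine add_le_add (le_trans ?_ c1) (le_trans ?_ d1)
    · exact mul_le_mul_of_nonneg_right (min_le_left _ _) c3
    · refine le_trans (mul_le_mul_of_nonneg_right (min_le_right _ _) d3) ?_
      rw [mul_assoc]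
      exact mul_le_mul_of_nonneg_left d2 hν.le
end

section
/- Let H and G be separable real Hilbert spaces, let B: G → 2^G be maximally monotone, let C: H → H, let D: G → 2^G have single-valued inverse D^{-1}: G → G, and let L ∈ B(H, G). On K = H ⊕ G define Q(x, v) = {L* v} × (−L x + B^{-1} v) (i.e. the case A = 0) and R(x, v) = (C x, D^{-1} v). Let W ∈ B(H) and U ∈ B(G) be strongly positive self-adjoint with ‖U^{1/2} L W^{1/2}‖ < 1, and let V(x, v) = (W x, (U^{-1} − L W L*)^{-1} v). Fix z = (x, v) ∈ K and (e_1, e_2) ∈ K, and set u = J_{U B^{-1}}( v + U( L( x − W(C x + L* v) ) − D^{-1} v + e_2 ) ) and y = x − W( C x + L* u + e_1 ). Then (y, u) = J_{V Q}( z − V R z + s ), where s = ( −W e_1, (U^{-1} − L W L*)^{-1}( e_2 + L W e_1 ) ). -/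
open Pointwise
open scoped RealInnerProductSpace

/-- with `Q(x,v) = {L*v} × (−Lx + B⁻¹v)` (the case `A = 0`),
`R(x,v) = (Cx, D⁻¹v)` and the diagonal preconditioner `V(x,v) = (Wx, (U⁻¹ − LWL*)⁻¹v)`, the
point `(y, u)` computed by the second primal-dual update equals `J_{VQ}(z − VRz + s)`. -/
theorem stmt_13
    {H : Type*} [NormedAddCommGroup H] [InnerProductSpace ℝ H] [CompleteSpace H]
    [TopologicalSpace.SeparableSpace H]
    {G : Type*} [NormedAddCommGroup G] [InnerProductSpace ℝ G] [CompleteSpace G]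
    [TopologicalSpace.SeparableSpace G]
    (B : G → Set G) (hB : IsMaxMono B)
    (C : H → H) (D : G → Set G) (Dinv : G → G)
    (hDinv : ∀ u : G, {x : G | u ∈ D x} = {Dinv u})
    (L : H →L[ℝ] G)
    (W Winv Whalf : H →L[ℝ] H) (U Uinv Uhalf : G →L[ℝ] G)
    (hW : IsSPSA W) (hU : IsSPSA U)
    (hWhalfSPSA : IsSPSA Whalf) (hUhalfSPSA : IsSPSA Uhalf)
    (hWhalf : ∀ x : H, Whalf (Whalf x) = W x) (hUhalf : ∀ v : G, Uhalf (Uhalf v) = U v)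
    (hWinv : ∀ x : H, W (Winv x) = x) (hWinv' : ∀ x : H, Winv (W x) = x)
    (hUinv : ∀ v : G, U (Uinv v) = v) (hUinv' : ∀ v : G, Uinv (U v) = v)
    (hnorm : ‖Uhalf.comp (L.comp Whalf)‖ < 1)
    -- `S` is the inverse of `U⁻¹ − LWL*`
    (S : G →L[ℝ] G)
    (hS : ∀ v : G, (Uinv - L.comp (W.comp (ContinuousLinearMap.adjoint L))) (S v) = v)
    (hS' : ∀ v : G, S ((Uinv - L.comp (W.comp (ContinuousLinearMap.adjoint L))) v) = v)
    (V : WithLp 2 (H × G) →L[ℝ] WithLp 2 (H × G))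
    (hV1 : ∀ z : WithLp 2 (H × G),
      (WithLp.equiv 2 (H × G) (V z)).1 = W (WithLp.equiv 2 (H × G) z).1)
    (hV2 : ∀ z : WithLp 2 (H × G),
      (WithLp.equiv 2 (H × G) (V z)).2 = S (WithLp.equiv 2 (H × G) z).2)
    (R : WithLp 2 (H × G) → WithLp 2 (H × G))
    (hR : ∀ z : WithLp 2 (H × G),
      R z = (WithLp.equiv 2 (H × G)).symm
        (C (WithLp.equiv 2 (H × G) z).1, Dinv (WithLp.equiv 2 (H × G) z).2))
    -- the fixed points and errors
    (x : H) (v : G) (e1 : H) (e2 : G)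
    -- `u = J_{UB⁻¹}(v + U(L(x − W(Cx + L*v)) − D⁻¹v + e₂))`
    (u : G) (hu : ∃ b ∈ svInv B u,
      v + U (L (x - W (C x + ContinuousLinearMap.adjoint L v)) - Dinv v + e2) = u + U b)
    -- `y = x − W(Cx + L*u + e₁)`
    (y : H) (hy : y = x - W (C x + ContinuousLinearMap.adjoint L u + e1)) :
    -- conclusion: `(y,u) = J_{VQ}(z − VRz + s)`, i.e. `z − VRz + s ∈ (y,u) + V(Q(y,u))`
    ∃ qq : WithLp 2 (H × G),
      (WithLp.equiv 2 (H × G) qq).1 = ContinuousLinearMap.adjoint L u ∧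
      (WithLp.equiv 2 (H × G) qq).2 ∈ {-(L y)} + svInv B u ∧
      (WithLp.equiv 2 (H × G)).symm (x, v)
          - V (R ((WithLp.equiv 2 (H × G)).symm (x, v)))
          + (WithLp.equiv 2 (H × G)).symm (-(W e1), S (e2 + L (W e1)))
        = (WithLp.equiv 2 (H × G)).symm (y, u) + V qq := by
  obtain ⟨b, hb, hub⟩ := hu
  refine ⟨(WithLp.equiv 2 (H × G)).symm (ContinuousLinearMap.adjoint L u, -(L y) + b),
    rfl, Set.add_mem_add rfl hb, ?_⟩
  have h1 := congrArg Uinv hub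
  simp only [map_add, hUinv', map_sub] at h1
  have key : (Uinv - L.comp (W.comp (ContinuousLinearMap.adjoint L))) v
      - Dinv v + (e2 + L (W e1))
      = (Uinv - L.comp (W.comp (ContinuousLinearMap.adjoint L))) u + (-(L y) + b) := by
    subst hy
    simp only [ContinuousLinearMap.sub_apply, ContinuousLinearMap.comp_apply, map_add, map_sub]
    have h2 : Uinv v = Uinv u + b - (L x - (L (W (C x))
        + L (W (ContinuousLinearMap.adjoint L v))) - Dinv v + e2) := by
      rw [← h1]; abel
    rw [h2]; abel
  have key2 := congrArg S key
  rw [map_add, map_sub, map_add S ((Uinv - _) u), hS', hS'] at key2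
  apply (WithLp.equiv 2 (H × G)).injective
  apply Prod.ext
  · change x - (WithLp.equiv 2 (H × G) (V _)).1 + -(W e1)
      = y + (WithLp.equiv 2 (H × G) (V _)).1
    rw [hV1, hV1, hR]
    change x - W (C x) + -(W e1) = y + W (ContinuousLinearMap.adjoint L u)
    subst hy
    simp only [map_add]
    abel
  · change v - (WithLp.equiv 2 (H × G) (V _)).2 + S (e2 + L (W e1))
      = u + (WithLp.equiv 2 (H × G) (V _)).2
    rw [hV2, hV2, hR]
    exact key2
end
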